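/- arXiv:1208.2536 — 2 statements merged into one kernel-verified Lean document; each statement's English description precedes it below -/
import Mathlib

section
/- Fix a real number β > 0 and a real number γ with γ² > 1, and let p_n be the associated recurrence polynomials. Then for all m, n ∈ ℕ the following discrete orthogonality relation holds: p_m(0)·p_n(0) + ∑_{k=1}^{∞} (1/2)·((β)_k / k!)·γ^{−2k}·( p_m(x_k)·p_n(x_k) + p_m(−x_k)·p_n(−x_k) ) = (γ²/(γ²−1))^β · δ_{m,n}, where x_k = √(γ²−1)·√k and δ_{m,n} is the Kronecker delta; in particular the series on the left converges. -/
/-!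
Write `d = γ² - 1` and `w k = (β)_k / k! · γ^(-2k)`, and let `L` be the functional
`f ↦ ∑_k w k · (f(x_k) + f(-x_k)) / 2` over all `k ≥ 0`, where `x_k² = d k`; the term `k = 0` is
`f 0`, since `w 0 = 1`. The claim is that `L (p_m p_n) = C δ_{mn}` with `C = (γ² / (γ² - 1))^β`.

Both recurrences together say `x p_n = a_n p_{n-1} + a_{n+1} p_{n+1}` with `a_0 = 0` and the other
`a_n` nonzero. For such a Jacobi recurrence orthogonality follows from the case `m = 0`
by induction on `m`, moving a factor `x` from `p_m` to `p_n` (`orthogonality_of_jacobi`). It remains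
to see `L (p_n) = C δ_{0n}`. For odd `n` the polynomial is odd and the terms cancel
(`jacobi_parity`).

The even polynomials satisfy a three-term recurrence in `x²`, which at `x² = d k` is, up to
normalization, that of the Meixner polynomials `M_n(k) = ∑_j (n choose j) f_j(k)`, where
`f_j(k) = k(k-1)⋯(k-j+1) (-d)^j / (β)_j` (`even_eq_meixner`). The binomial series gives
`∑_k w k · f_j(k) = C (-1)^j` (`hasSum_meixnerTerm`), so
`∑_k w k · M_n(k) = C ∑_j (n choose j) (-1)^j`, which is zero unless `n = 0`.
-/

noncomputable section

/-- Pochhammer symbol `(a)_k = a(a+1)⋯(a+k-1)`. -/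
def poch (a : ℝ) : ℕ → ℝ
  | 0 => 1
  | n + 1 => poch a n * (a + n)

/-! ### Binomial sums and their three-term recurrence -/

/-- The iterated binomial sum `binomSum f n j = ∑ i, (n choose i) * f (j + i)`, that is, the value
at `j` of `(1 + shift)^n f`, defined through Pascal's rule. -/
def binomSum (f : ℕ → ℝ) : ℕ → ℕ → ℝ
  | 0, j => f j
  | n + 1, j => binomSum f n j + binomSum f n (j + 1)

/-- A first-order recurrence for `f` becomes a recurrence for its binomial sums; the terms with
factor `n + 1` come from commuting multiplication by `j` past `(1 + shift)^(n+1)`. -/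
lemma binomSum_rec (f : ℕ → ℝ) (d y β : ℝ)
    (hf : ∀ j : ℕ, y * f j = d * j * f j - (β + j) * f (j + 1)) (n : ℕ) :
    ∀ j : ℕ, y * binomSum f (n + 1) j =
      d * (j * binomSum f (n + 1) j + (n + 1) * binomSum f n (j + 1))
        - (β + j) * binomSum f (n + 1) (j + 1) - (n + 1) * binomSum f n (j + 2) := by
  induction n with
  | zero =>
    intro j
    have h1 := hf j
    have h2 := hf (j + 1)
    simp only [binomSum]
    push_cast at *
    linear_combination h1 + h2
  | succ n ih =>
    intro j
    have h1 := ih j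
    have h2 := ih (j + 1)
    simp only [binomSum] at *
    push_cast at *
    linear_combination h1 + h2

/-- The three-term recurrence of the binomial sums at `j = 0`. The index `n - 1` is truncated, but
at `n = 0` its coefficient vanishes. -/
lemma binomSum_three_term (f : ℕ → ℝ) (d y β : ℝ)
    (hf : ∀ j : ℕ, y * f j = d * j * f j - (β + j) * f (j + 1)) (n : ℕ) :
    y * binomSum f n 0 = (n * (d + 1) + (β + n)) * binomSum f n 0
      - (β + n) * binomSum f (n + 1) 0 - n * (d + 1) * binomSum f (n - 1) 0 := by
  cases n with
  | zero =>
    have h := hf 0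
    simp only [binomSum]
    push_cast at *
    linear_combination h
  | succ n =>
    have h := binomSum_rec f d y β hf n 0
    simp only [binomSum, Nat.add_sub_cancel] at *
    push_cast at *
    linear_combination h

/-! ### The binomial series and the terms of the Meixner polynomials -/

lemma poch_pos {a : ℝ} (ha : 0 < a) (n : ℕ) : 0 < poch a n := by
  induction n with
  | zero => simp [poch]
  | succ n ih => rw [poch]; positivity

lemma poch_add (a : ℝ) (j k : ℕ) : poch a (k + j) = poch a j * poch (a + j) k := by
  induction k with
  | zero => simp [poch]
  | succ k ih =>
    rw [Nat.add_right_comm, poch, ih, poch]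
    push_cast
    ring

lemma poch_div_factorial (a : ℝ) (n : ℕ) :
    poch a n / n.factorial = Ring.choose (a + n - 1) n := by
  have h : poch a n = (ascPochhammer ℝ n).eval a := by
    induction n with
    | zero => simp [poch]
    | succ n ih => rw [poch, ih, ascPochhammer_succ_eval]
  have h2 := Ring.factorial_nsmul_multichoose_eq_ascPochhammer a n
  rw [Polynomial.ascPochhammer_smeval_eq_eval, ← h, nsmul_eq_mul] at h2
  rw [Ring.choose, show a + (n : ℝ) - 1 - n + 1 = a by ring, ← h2]
  field_simp

lemma HasSum.of_eq {ι : Type*} {f g : ι → ℝ} {a b : ℝ} (h : HasSum f a) (hf : ∀ k, g k = f k)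
    (hab : b = a) : HasSum g b := by
  rw [funext hf, hab]
  exact h

lemma hasSum_poch (a c : ℝ) (hc0 : 0 < c) (hc : c < 1) :
    HasSum (fun k : ℕ => poch a k / k.factorial * c ^ k) (1 / (1 - c) ^ a) := by
  have h := (Real.one_div_one_sub_rpow_hasFPowerSeriesOnBall_zero a).hasSum (y := c)
    (by simp [Metric.mem_eball, edist_dist, abs_of_pos hc0, hc])
  simp only [zero_add] at h
  refine h.of_eq (fun k => ?_) rfl
  rw [poch_div_factorial]
  simp [FormalMultilinearSeries.ofScalars, mul_comm]

/-- The term `k(k-1)⋯(k-j+1) (-d)^j / (β)_j` in the expansion of the Meixner polynomials. -/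
def meixnerTerm (β d : ℝ) (k j : ℕ) : ℝ :=
  (k.descFactorial j : ℝ) * (-d) ^ j / poch β j

lemma meixnerTerm_rec (β d : ℝ) (hβ : 0 < β) (k j : ℕ) :
    d * k * meixnerTerm β d k j =
      d * j * meixnerTerm β d k j - (β + j) * meixnerTerm β d k (j + 1) := by
  have hp := (poch_pos hβ j).ne'
  have hb : β + j ≠ 0 := by positivity
  have hcast : ((k.descFactorial (j + 1) : ℕ) : ℝ) = (k - j) * k.descFactorial j := by
    rw [Nat.descFactorial_succ]
    rcases le_or_gt j k with h | h
    · push_cast [h]; ring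
    · simp [Nat.descFactorial_of_lt h]
  simp only [meixnerTerm, poch, hcast, pow_succ]
  field_simp
  ring

/-- Discarding the vanishing terms `k < j` turns the sum into the binomial series with parameter
`β + j`. -/
lemma hasSum_meixnerTerm (β g : ℝ) (hβ : 0 < β) (hg : 1 < g) (j : ℕ) :
    HasSum (fun k : ℕ => poch β k / k.factorial * g⁻¹ ^ k * meixnerTerm β (g - 1) k j)
      ((g / (g - 1)) ^ β * (-1) ^ j) := by
  have hg0 : 0 < g := by linarith
  have hg1 : 0 < g - 1 := by linarith
  have hbase : 1 - g⁻¹ = (g / (g - 1))⁻¹ := by field_simp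
  have hpos : 0 < g / (g - 1) := by positivity
  have hsum := (hasSum_poch (β + j) g⁻¹ (by positivity) (inv_lt_one_of_one_lt₀ hg)).mul_left
    (g⁻¹ ^ j * (-(g - 1)) ^ j)
  have hz : ∑ i ∈ Finset.range j,
      poch β i / i.factorial * g⁻¹ ^ i * meixnerTerm β (g - 1) i j = 0 := by
    refine Finset.sum_eq_zero fun i hi => ?_
    simp [meixnerTerm, Nat.descFactorial_of_lt (Finset.mem_range.mp hi)]
  rw [← hasSum_nat_add_iff' j, hz, sub_zero]
  refine hsum.of_eq (fun k => ?_) ?_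
  · have hf := Nat.factorial_mul_descFactorial (Nat.le_add_left j k)
    rw [Nat.add_sub_cancel] at hf
    have hp := (poch_pos hβ j).ne'
    have hd : ((k + j).descFactorial j : ℝ) ≠ 0 := by
      have := Nat.descFactorial_pos.2 (Nat.le_add_left j k)
      positivity
    rw [meixnerTerm, poch_add, ← hf, pow_add]
    push_cast
    field_simp
  · rw [hbase, Real.inv_rpow hpos.le, one_div, inv_inv, Real.rpow_add hpos, Real.rpow_natCast,
      mul_left_comm, ← mul_pow, ← mul_pow]
    congr 2
    field_simp

lemma hasSum_binomSum (u : ℕ → ℝ) (f : ℕ → ℕ → ℝ) (C : ℝ)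
    (h : ∀ j, HasSum (fun k => u k * f k j) (C * (-1) ^ j)) (n : ℕ) :
    ∀ j, HasSum (fun k => u k * binomSum (f k) n j) (if n = 0 then C * (-1) ^ j else 0) := by
  induction n with
  | zero => simpa [binomSum] using h
  | succ n ih =>
    intro j
    refine ((ih j).add (ih (j + 1))).of_eq (fun k => ?_) ?_
    · simp only [binomSum]; ring
    · rw [if_neg n.succ_ne_zero]
      split_ifs
      · ring
      · simp

/-! ### Jacobi recurrences -/

/-- If `x q_n = a_n q_{n-1} + a_{n+1} q_{n+1}` and `q_0 = 1`, then `q_n` has the parity of `n`.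
The truncated index at `n = 0` is harmless because `a 0 = 0`. -/
lemma jacobi_parity (a : ℕ → ℝ) (q : ℕ → ℝ → ℝ) (ha0 : a 0 = 0) (ha : ∀ n, a (n + 1) ≠ 0)
    (hq0 : ∀ x, q 0 x = 1)
    (hrec : ∀ n x, x * q n x = a n * q (n - 1) x + a (n + 1) * q (n + 1) x) (n : ℕ) :
    ∀ x, q n (-x) = (-1) ^ n * q n x := by
  induction n using Nat.strong_induction_on with
  | _ n ih =>
    intro x
    rcases n with _ | _ | n
    · simp [hq0]
    · have h1 := hrec 0 x
      have h2 := hrec 0 (-x)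
      simp only [ha0, hq0] at h1 h2
      apply mul_left_cancel₀ (ha 0)
      linear_combination -h1 - h2
    · have h1 := hrec (n + 1) x
      have h2 := hrec (n + 1) (-x)
      simp only [Nat.add_sub_cancel] at h1 h2
      rw [ih n (by omega), ih (n + 1) (by omega)] at h2
      apply mul_left_cancel₀ (ha (n + 1))
      linear_combination -h2 + (-1) ^ n * h1

/-- Orthogonality for a Jacobi recurrence follows from the vanishing of the functional on `q_n`,
`n ≥ 1`. The functional is a weighted sum over the points `X k`, `k : ι`. -/
lemma orthogonality_of_jacobi {ι : Type*} (a : ℕ → ℝ) (q : ℕ → ℝ → ℝ) (ha0 : a 0 = 0)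
    (ha : ∀ n, a (n + 1) ≠ 0) (hq0 : ∀ x, q 0 x = 1)
    (hrec : ∀ n x, x * q n x = a n * q (n - 1) x + a (n + 1) * q (n + 1) x)
    (u X : ι → ℝ) (C : ℝ)
    (h0 : ∀ n, HasSum (fun k => u k * (q n (X k) + q n (-X k)))
      (C * if 0 = n then 1 else 0)) (m : ℕ) :
    ∀ n, HasSum (fun k => u k * (q m (X k) * q n (X k) + q m (-X k) * q n (-X k)))
      (C * if m = n then 1 else 0) := by
  induction m using Nat.strong_induction_on with
  | _ m ih =>
    intro n
    rcases m with _ | m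
    · simpa [hq0] using h0 n
    · have e1 := (ih m (by omega) (n + 1)).mul_left (a (n + 1))
      have e2 := (ih m (by omega) (n - 1)).mul_left (a n)
      have e3 := (ih (m - 1) (by omega) n).mul_left (a m)
      -- `a_{m+1} q_{m+1} q_n = q_m (a_{n+1} q_{n+1} + a_n q_{n-1}) - a_m q_{m-1} q_n`
      have e := ((e1.add e2).sub e3).mul_left (a (m + 1))⁻¹
      refine e.of_eq (fun k => ?_) ?_
      · rw [eq_inv_mul_iff_mul_eq₀ (ha m)]
        linear_combination -u k * q n (X k) * hrec m (X k) + u k * q m (X k) * hrec n (X k)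
          - u k * q n (-X k) * hrec m (-X k) + u k * q m (-X k) * hrec n (-X k)
      · rw [eq_inv_mul_iff_mul_eq₀ (ha m)]
        rcases n with _ | n <;> rcases m with _ | m <;> grind

/-! ### The orthogonality relation -/

/-- The even recurrence polynomials are multiples `A n` of Meixner polynomials: eliminating the odd
ones gives a three-term recurrence in `x²`. -/
lemma even_eq_meixner (β γ : ℝ) (hβ : 0 < β) (hγ : 1 < γ ^ 2) (p : ℕ → ℝ → ℝ)
    (hp0 : ∀ x : ℝ, p 0 x = 1)
    (hrec1 : ∀ (n : ℕ) (x : ℝ), x * p (2 * n) x =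
      γ * Real.sqrt n * p (2 * n - 1) x + Real.sqrt (β + n) * p (2 * n + 1) x)
    (hrec2 : ∀ (n : ℕ) (x : ℝ), x * p (2 * n + 1) x =
      Real.sqrt (β + n) * p (2 * n) x + γ * Real.sqrt (n + 1) * p (2 * n + 2) x) (n : ℕ) :
    ∃ A : ℝ, ∀ (x : ℝ) (k : ℕ), x ^ 2 = (γ ^ 2 - 1) * k →
      p (2 * n) x = A * binomSum (meixnerTerm β (γ ^ 2 - 1) k) n 0 := by
  have hγ0 : γ ≠ 0 := by rintro rfl; norm_num at hγ
  let A : ℕ → ℝ := fun n =>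
    Nat.rec 1 (fun n a => -a * Real.sqrt (β + n) / (γ * Real.sqrt (n + 1))) n
  have hA : ∀ n : ℕ, A (n + 1) * (γ * Real.sqrt (n + 1)) = -A n * Real.sqrt (β + n) := by
    intro n
    have : Real.sqrt ((n : ℝ) + 1) ≠ 0 := by positivity
    change (-A n * Real.sqrt (β + n) / (γ * Real.sqrt (n + 1))) * _ = _
    field_simp
  refine ⟨A n, fun x k hx => ?_⟩
  have hM := binomSum_three_term (meixnerTerm β (γ ^ 2 - 1) k) (γ ^ 2 - 1) ((γ ^ 2 - 1) * k) β
    (meixnerTerm_rec β (γ ^ 2 - 1) hβ k)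
  rw [← hx] at hM
  induction n using Nat.strong_induction_on with
  | _ n ih =>
    rcases n with _ | n
    · simp [A, hp0, binomSum, meixnerTerm, poch]
    · have hR : Real.sqrt (β + n) ^ 2 = β + n := Real.sq_sqrt (by positivity)
      have h1 := hrec1 n x
      have h2 := hrec2 n x
      have i1 := ih n (by omega)
      have hMn := hM n
      have hAn := hA n
      -- the contribution of the odd polynomial below, expressed through the Meixner sums
      have h3 : x * (γ * Real.sqrt n * p (2 * n - 1) x) =
          γ ^ 2 * n * A n * binomSum (meixnerTerm β (γ ^ 2 - 1) k) n 0
          - γ ^ 2 * n * A n * binomSum (meixnerTerm β (γ ^ 2 - 1) k) (n - 1) 0 := by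
        rcases n with _ | n
        · simp
        · have h4 := hrec2 n x
          have i2 := ih n (by omega)
          have hA' := hA n
          simp only [Nat.add_sub_cancel, show 2 * (n + 1) - 1 = 2 * n + 1 by omega] at *
          rw [show 2 * (n + 1) = 2 * n + 2 by ring] at i1
          rw [i1, i2] at h4
          have hS' : Real.sqrt ((n : ℝ) + 1) ^ 2 = n + 1 := Real.sq_sqrt (by positivity)
          push_cast at *
          linear_combination γ * √((n : ℝ) + 1) * h4
            + γ ^ 2 * A (n + 1) * (binomSum (meixnerTerm β (γ ^ 2 - 1) k) (n + 1) 0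
              - binomSum (meixnerTerm β (γ ^ 2 - 1) k) n 0) * hS'
            + γ * √((n : ℝ) + 1) * binomSum (meixnerTerm β (γ ^ 2 - 1) k) n 0 * hA'
      rw [show 2 * (n + 1) = 2 * n + 2 by ring]
      rw [i1] at h1 h2
      have hne : Real.sqrt (β + n) * (γ * Real.sqrt ((n : ℝ) + 1)) ≠ 0 := by positivity
      apply mul_left_cancel₀ hne
      linear_combination -Real.sqrt (β + n) * h2 - x * h1 - h3 + A n * hMn
        - Real.sqrt (β + n) * binomSum (meixnerTerm β (γ ^ 2 - 1) k) (n + 1) 0 * hAn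
        + A n * (binomSum (meixnerTerm β (γ ^ 2 - 1) k) (n + 1) 0
          - binomSum (meixnerTerm β (γ ^ 2 - 1) k) n 0) * hR

theorem stmt_6 (β γ : ℝ) (hβ : 0 < β) (hγ : 1 < γ ^ 2)
    (p : ℕ → ℝ → ℝ)
    (hp0 : ∀ x : ℝ, p 0 x = 1)
    (hrec1 : ∀ (n : ℕ) (x : ℝ), x * p (2 * n) x =
      γ * Real.sqrt n * p (2 * n - 1) x + Real.sqrt (β + n) * p (2 * n + 1) x)
    (hrec2 : ∀ (n : ℕ) (x : ℝ), x * p (2 * n + 1) x =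
      Real.sqrt (β + n) * p (2 * n) x + γ * Real.sqrt (n + 1) * p (2 * n + 2) x)
    (m n : ℕ) :
    ∃ S : ℝ,
      HasSum (fun k : ℕ =>
        (1 / 2) * (poch β (k + 1) / (k + 1).factorial) * γ ^ (-(2 * ((k : ℤ) + 1))) *
        (p m (Real.sqrt (γ ^ 2 - 1) * Real.sqrt (k + 1)) *
            p n (Real.sqrt (γ ^ 2 - 1) * Real.sqrt (k + 1)) +
         p m (-(Real.sqrt (γ ^ 2 - 1) * Real.sqrt (k + 1))) *
            p n (-(Real.sqrt (γ ^ 2 - 1) * Real.sqrt (k + 1))))) S ∧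
      p m 0 * p n 0 + S = (γ ^ 2 / (γ ^ 2 - 1)) ^ β * (if m = n then (1 : ℝ) else 0) := by
  have hγ0 : γ ≠ 0 := by rintro rfl; norm_num at hγ
  -- `a (2 n + 1) = R_n` and `a (2 n) = S_n`
  let a : ℕ → ℝ := fun n =>
    if Even n then γ * Real.sqrt ((n / 2 : ℕ) : ℝ) else Real.sqrt (β + ((n / 2 : ℕ) : ℝ))
  have ae : ∀ i : ℕ, a (2 * i) = γ * Real.sqrt i := by
    intro i
    simp [a]
  have ao : ∀ i : ℕ, a (2 * i + 1) = Real.sqrt (β + i) := by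
    intro i
    have h : (2 * i + 1) / 2 = i := by omega
    simp [a, h]
  have ha0 : a 0 = 0 := by simpa using ae 0
  have ha : ∀ n, a (n + 1) ≠ 0 := by
    intro n
    obtain ⟨i, rfl | rfl⟩ := Nat.even_or_odd' n
    · rw [ao]; positivity
    · rw [show 2 * i + 1 + 1 = 2 * (i + 1) by ring, ae]
      push_cast
      positivity
  have hrec : ∀ n x, x * p n x = a n * p (n - 1) x + a (n + 1) * p (n + 1) x := by
    intro n x
    obtain ⟨i, rfl | rfl⟩ := Nat.even_or_odd' n
    · rw [ae, ao]; exact hrec1 i x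
    · have h := hrec2 i x
      rw [ao, show 2 * i + 1 + 1 = 2 * (i + 1) by ring, ae]
      push_cast
      simpa [mul_add] using h
  let w : ℕ → ℝ := fun k => poch β k / k.factorial * (γ ^ 2)⁻¹ ^ k
  let X : ℕ → ℝ := fun k => Real.sqrt (γ ^ 2 - 1) * Real.sqrt k
  have hX : ∀ k, X k ^ 2 = (γ ^ 2 - 1) * k := by
    intro k
    simp only [X]
    rw [mul_pow, Real.sq_sqrt (by linarith), Real.sq_sqrt (by positivity)]
  have hpar := jacobi_parity a p ha0 ha hp0 hrec
  have h0 : ∀ n, HasSum (fun k => 1 / 2 * w k * (p n (X k) + p n (-X k)))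
      ((γ ^ 2 / (γ ^ 2 - 1)) ^ β * if 0 = n then 1 else 0) := by
    intro n
    obtain ⟨i, rfl | rfl⟩ := Nat.even_or_odd' n
    · obtain ⟨A, hA⟩ := even_eq_meixner β γ hβ hγ p hp0 hrec1 hrec2 i
      rcases i with _ | i
      · have h := hasSum_meixnerTerm β (γ ^ 2) hβ hγ 0
        refine h.of_eq (fun k => ?_) (by simp)
        simp [hp0, meixnerTerm, poch, w]
        ring
      · have h := (hasSum_binomSum w (meixnerTerm β (γ ^ 2 - 1)) _
          (hasSum_meixnerTerm β (γ ^ 2) hβ hγ) (i + 1) 0).mul_left A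
        refine h.of_eq (fun k => ?_) (by simp)
        rw [hA _ _ (hX k), hA _ k (by rw [neg_sq, hX])]
        ring
    · refine hasSum_zero.of_eq (fun k => ?_) (by simp)
      rw [hpar, Odd.neg_one_pow ⟨i, rfl⟩]
      ring
  have hmain := orthogonality_of_jacobi a p ha0 ha hp0 hrec (fun k => 1 / 2 * w k) X _ h0 m n
  -- split off `k = 0`, where `X 0 = 0` and both halves give `p m 0 * p n 0`
  refine ⟨_, ((hasSum_nat_add_iff' 1).2 hmain).of_eq (fun k => ?_) rfl, ?_⟩
  · have hz : γ ^ (-(2 * ((k : ℤ) + 1))) = (γ ^ 2)⁻¹ ^ (k + 1) := by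
      rw [zpow_neg, inv_pow, ← pow_mul]
      norm_cast
    rw [hz]
    simp only [w, X]
    push_cast
    ring
  · simp [w, X, poch]
    ring
end
end

section
/- Fix real β > 0 and 0 < γ < 1. Let k, l ∈ ℕ, let ε, ε' ∈ {1, −1}, and set x = ε√(1−γ²)√(β+k) and y = ε'√(1−γ²)√(β+l). Define, for n ∈ ℕ, Φ_{2n}(x) = (−1)^n γ^{n+k} √((β)_n (β)_k / (2 n! k!)) (1−γ²)^{β/2} M_n(k; β, γ²) and Φ_{2n+1}(x) = (−1)^n γ^{n+k} √((β+1)_n (β)_k / (2β n! k!)) (1−γ²)^{β/2} · x · M_n(k; β+1, γ²), and analogously for y with k replaced by l. Then the complex series ∑_{n=0}^{∞} (−i)^n Φ_n(x) Φ_n(y) converges and equals (1/2)·(2γ/(1+γ²))^{k+l}·((1−γ²)/(1+γ²))^{β}·√((β)_k (β)_l / (k! l!)) · [ ₂F₁(−k, −l; β; −(1/4)(γ − 1/γ)²) − i·(xy/(β(1+γ²)))·₂F₁(−k, −l; β+1; −(1/4)(γ − 1/γ)²) ]. -/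
/-! The even and odd parts of the series are, up to constants and a factor `-i`, the values at
`t = -c`, `c = γ²`, of the bilinear generating function `∑ (b)_m / m! tᵐ M_m(k; b, c) M_m(l; b, c)`
of the Meixner polynomials, for `b = β` and `b = β + 1` (`hasSum_bilinear`).

That function is evaluated by induction on `l`. For `l = 0` it is the ordinary generating function
`hasSum_hyp`, which follows from the binomial series through the forward difference `hyp_diff`.
For the step, `M_m(k)` and the claimed value are both terminating Gauss sums, so both obey the
contiguous relation `hyp_contiguous` in `k` and in `l`. In the contiguous relation for `M_m`, the
degree `m` enters only through the term `m (1 - 1/c) M_m`; subtracting the relations in `k` and in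
`l` eliminates it and expresses the summand at `(k, l + 1)` by those at `(k, l)`, `(k, l - 1)`,
`(k + 1, l)` and `(k - 1, l)` with coefficients free of `m`. Hence the sum at `l + 1` is determined
by the sums at smaller `l`, and the right-hand side satisfies the same relation, again by
contiguity, now with `w = -(1 - c)² / (4c)`. No power series has to be differentiated. -/


noncomputable section

open Finset

/-- Meixner polynomial `M_n(k; b, c)`. -/
def meixner (n : ℕ) (k b c : ℝ) : ℝ :=
  ∑ j ∈ range (n + 1),
    poch (-(n : ℝ)) j * poch (-k) j * (1 - 1 / c) ^ j / (poch b j * j.factorial)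

/-- Terminating Gauss hypergeometric sum `₂F₁(-k, -l; b; w)`. -/
def F21nn (k l : ℕ) (b w : ℝ) : ℝ :=
  ∑ j ∈ range (min k l + 1),
    poch (-(k : ℝ)) j * poch (-(l : ℝ)) j * w ^ j / (poch b j * j.factorial)

/-! ### Pochhammer symbols and terminating Gauss sums -/

theorem poch_succ' (a : ℝ) (n : ℕ) : poch a (n + 1) = a * poch (a + 1) n := by
  induction n with
  | zero => simp [poch]
  | succ n ih =>
    rw [poch, ih, poch]
    push_cast
    ring

theorem poch_pos_s11 {b : ℝ} (hb : 0 < b) (n : ℕ) : 0 < poch b n := by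
  induction n with
  | zero => simp [poch]
  | succ n ih => exact mul_pos ih (by positivity)

theorem poch_neg_nat {n j : ℕ} (h : n < j) : poch (-(n : ℝ)) j = 0 := by
  induction j with
  | zero => omega
  | succ j ih =>
    rcases Nat.lt_succ_iff_lt_or_eq.mp h with h | rfl
    · simp [poch, ih h]
    · simp [poch]

theorem mul_poch_add_one (a : ℝ) (j : ℕ) : a * poch (a + 1) j = poch a j * (a + j) := by
  rw [← poch_succ', poch]

/-- The terminating sum `₂F₁(-n, a; b; z)` with an arbitrary real second parameter. It contains
both `meixner` and `F21nn` as special cases. -/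
def hyp (n : ℕ) (a b z : ℝ) : ℝ :=
  ∑ j ∈ range (n + 1), poch (-(n : ℝ)) j * poch a j * z ^ j / (poch b j * j.factorial)

theorem meixner_eq_hyp (n : ℕ) (k b c : ℝ) : meixner n k b c = hyp n (-k) b (1 - 1 / c) := rfl

theorem F21nn_eq_hyp (k l : ℕ) (b w : ℝ) : F21nn k l b w = hyp k (-(l : ℝ)) b w := by
  unfold F21nn hyp
  refine sum_subset (fun j => by simp only [mem_range]; omega) fun j hj hj' => ?_
  simp only [mem_range] at hj hj'
  rw [poch_neg_nat (show l < j by omega)]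
  simp

theorem F21nn_comm (k l : ℕ) (b w : ℝ) : F21nn k l b w = F21nn l k b w := by
  unfold F21nn
  rw [min_comm]
  exact sum_congr rfl fun j _ => by ring

theorem hyp_neg_zero (n : ℕ) (b z : ℝ) : hyp n (-((0 : ℕ) : ℝ)) b z = 1 := by
  rw [← F21nn_eq_hyp]
  simp [F21nn, poch]

/-! ### Contiguous relations -/

/-- Gauss's contiguous relation in the second parameter. The linear combination of the three
series has partial sums in closed form, and the `N`-th of them carries the factor `N - n`. -/
theorem hyp_contiguous (n : ℕ) (a : ℝ) {b : ℝ} (hb : 0 < b) (z : ℝ) :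
    (b - a) * hyp n (a - 1) b z - (b - 2 * a + (a + n) * z) * hyp n a b z
      - a * (1 - z) * hyp n (a + 1) b z = 0 := by
  have key : ∀ N : ℕ, ∑ j ∈ range (N + 1),
      (poch (-(n : ℝ)) j * z ^ j / (poch b j * j.factorial)) *
        ((b - a) * poch (a - 1) j - (b - 2 * a + (a + n) * z) * poch a j
          - (1 - z) * (poch a j * (a + j))) =
      (poch (-(n : ℝ)) N * z ^ N / (poch b N * N.factorial)) * (z * (N - n) * poch a N) := by
    intro N
    induction N with
    | zero => simp [poch]; ring
    | succ N ih =>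
      rw [sum_range_succ, ih, poch_succ' (a - 1), sub_add_cancel]
      have h1 := (poch_pos_s11 hb N).ne'
      have h2 : b + N ≠ 0 := by positivity
      have h3 : (N.factorial : ℝ) ≠ 0 := by positivity
      have h4 : (N : ℝ) + 1 ≠ 0 := by positivity
      simp only [poch, Nat.factorial_succ]
      push_cast
      field_simp
      ring
  have h := key n
  rw [sub_self, mul_zero, zero_mul, mul_zero] at h
  rw [← h]
  unfold hyp
  simp only [mul_sum, ← sum_sub_distrib]
  refine sum_congr rfl fun j _ => ?_
  rw [← mul_poch_add_one]
  ring

theorem hyp_contiguous_nat (n k : ℕ) {b : ℝ} (hb : 0 < b) (z : ℝ) :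
    (b + k) * hyp n (-((k + 1 : ℕ) : ℝ)) b z =
      (b + 2 * k + (n - k) * z) * hyp n (-(k : ℝ)) b z
        - k * (1 - z) * hyp n (-((k - 1 : ℕ) : ℝ)) b z := by
  have h := hyp_contiguous n (-(k : ℝ)) hb z
  have e1 : -((k + 1 : ℕ) : ℝ) = -(k : ℝ) - 1 := by push_cast; ring
  -- For `k = 0` the truncated index `k - 1` is harmless: its coefficient vanishes.
  rcases k with _ | k
  · simp only [Nat.cast_zero] at h e1 ⊢
    rw [e1]
    linarith
  · have e2 : -((k + 1 - 1 : ℕ) : ℝ) = -((k + 1 : ℕ) : ℝ) + 1 := by push_cast; simp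
    rw [e1, e2]
    linarith

/-- The forward difference of `₂F₁(-n, -k; b; z)` in `k`, written with `a = -k`: it is a
multiple of the same sum with `n` lowered and `b` raised by one. -/
theorem hyp_diff (n : ℕ) (a : ℝ) {b : ℝ} (hb : 0 < b) (z : ℝ) :
    hyp (n + 1) (a - 1) b z =
      hyp (n + 1) a b z + (n + 1) * z / b * hyp n a (b + 1) z := by
  rw [← sub_eq_iff_eq_add']
  unfold hyp
  rw [← sum_sub_distrib, sum_range_succ', mul_sum]
  simp only [poch, Nat.factorial_zero, pow_zero, sub_self, add_zero]
  refine sum_congr rfl fun j _ => ?_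
  have e : -((n + 1 : ℕ) : ℝ) + 1 = -(n : ℝ) := by push_cast; ring
  have h1 := (poch_pos_s11 (show 0 < b + 1 by positivity) j).ne'
  have h3 : (j.factorial : ℝ) ≠ 0 := by positivity
  have h4 : (j : ℝ) + 1 ≠ 0 := by positivity
  have hs : ∀ x : ℝ, poch x j * (x + j) = x * poch (x + 1) j := fun x => (mul_poch_add_one x j).symm
  rw [hs (-((n + 1 : ℕ) : ℝ)), hs b, hs (a - 1), e, sub_add_cancel, Nat.factorial_succ]
  push_cast
  field_simp
  ring

/-! ### Generating functions of the Meixner polynomials -/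

theorem hasSum_of_eq {f g : ℕ → ℝ} {s t : ℝ} (h : HasSum f s) (hf : ∀ n, g n = f n)
    (hs : t = s) : HasSum g t := by
  rwa [hs, funext hf]

/-- The binomial series in terms of Pochhammer symbols. -/
theorem hasSum_poch_s11 (b : ℝ) {t : ℝ} (ht : |t| < 1) :
    HasSum (fun n : ℕ => t ^ n * (poch b n / n.factorial)) ((1 - t) ^ (-b)) := by
  have h := (Real.one_div_one_sub_rpow_hasFPowerSeriesOnBall_zero b).hasSum (y := t)
    (by simpa [Metric.mem_eball, edist_dist, Real.dist_eq] using ht)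
  have e : ∀ n : ℕ, Ring.choose (b + n - 1) n = poch b n / n.factorial := by
    intro n
    have h1 := Ring.factorial_nsmul_multichoose_eq_ascPochhammer b n
    have h2 : (ascPochhammer ℕ n).smeval b = poch b n := by
      rw [Polynomial.ascPochhammer_smeval_eq_eval]
      induction n with
      | zero => simp [poch]
      | succ n ih =>
        rw [ascPochhammer_succ_eval, poch, ih]
        exact Ring.factorial_nsmul_multichoose_eq_ascPochhammer b n
    rw [← Ring.multichoose_eq, eq_div_iff (by positivity), ← h2, ← h1, nsmul_eq_mul, mul_comm]
  simp only [FormalMultilinearSeries.ofScalars_apply_eq, zero_add, e, smul_eq_mul] at h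
  have ht' : 0 ≤ 1 - t := by linarith [(abs_lt.mp ht).2]
  rw [one_div, ← Real.rpow_neg ht'] at h
  exact h.congr_fun (fun n => by ring)

/-- The generating function of the Meixner polynomials in the degree `n`. -/
theorem hasSum_hyp (k : ℕ) (z : ℝ) {t : ℝ} (ht : |t| < 1) : ∀ {b : ℝ}, 0 < b →
    HasSum (fun n : ℕ => t ^ n * (poch b n / n.factorial) * hyp n (-(k : ℝ)) b z)
      ((1 - t) ^ (-b) * (1 + z * t / (1 - t)) ^ k) := by
  have ht' : 0 < 1 - t := by linarith [(abs_lt.mp ht).2]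
  induction k with
  | zero =>
    intro b hb
    simp only [hyp_neg_zero, mul_one, pow_zero]
    exact hasSum_poch_s11 b ht
  | succ k ih =>
    intro b hb
    have h1 := ih hb
    -- The difference in `k` lowers the degree, so the series are compared from index `1` on.
    have h2 := (ih (show 0 < b + 1 by positivity)).mul_left (z * t)
    have e1 : -((k + 1 : ℕ) : ℝ) = -(k : ℝ) - 1 := by push_cast; ring
    rw [← hasSum_nat_add_iff' 1] at h1 ⊢
    have h := h1.add h2
    refine hasSum_of_eq h (fun n => ?_) ?_
    · rw [e1, hyp_diff n _ hb, poch_succ', Nat.factorial_succ]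
      have h3 : (n.factorial : ℝ) ≠ 0 := by positivity
      have h4 : (n : ℝ) + 1 ≠ 0 := by positivity
      push_cast
      field_simp
      ring
    · have hr : (1 - t) ^ (-(b + 1)) = (1 - t) ^ (-b) / (1 - t) := by
        rw [neg_add, ← sub_eq_add_neg, Real.rpow_sub_one ht'.ne']
      rw [hr]
      simp only [sum_range_one, hyp, poch]
      simp only [CharP.cast_eq_zero, zero_add, sum_range_one, poch]
      ring

/-- The bilinear generating function of the Meixner polynomials
`∑ (b)_m / m! tᵐ M_m(k; b, c) M_m(l; b, c)` at the point `t = -c`. Both sides satisfy the same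
recurrence in `(k, l)`, which produces the value at `l + 1` from those at `l` and `l - 1`. On the
left, it holds summand by summand: the contiguous relations in `k` and in `l` contain the same
multiple of `m`, which cancels from their difference. -/
theorem hasSum_bilinear {b c : ℝ} (hb : 0 < b) (hc0 : 0 < c) (hc1 : c < 1) (l : ℕ) : ∀ k : ℕ,
    HasSum (fun m : ℕ => (-c) ^ m * (poch b m / m.factorial) *
        (meixner m k b c * meixner m l b c))
      ((1 + c) ^ (-b) * ((2 / (1 + c)) ^ (k + l) * F21nn k l b (-(1 - c) ^ 2 / (4 * c)))) := by
  simp only [meixner_eq_hyp]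
  induction l using Nat.strong_induction_on with
  | _ l ih =>
  intro k
  rcases l with _ | l
  · simp only [hyp_neg_zero, mul_one, F21nn_eq_hyp, add_zero]
    have h := hasSum_hyp k (1 - 1 / c) (t := -c) (by rw [abs_neg, abs_of_pos hc0]; exact hc1) hb
    have e : 1 + (1 - 1 / c) * -c / (1 - -c) = 2 / (1 + c) := by
      rw [sub_neg_eq_add]
      field_simp
      ring
    rw [e, sub_neg_eq_add] at h
    exact h
  · set z := 1 - 1 / c with hz
    set w := -(1 - c) ^ 2 / (4 * c) with hw
    have hbl : b + (l : ℝ) ≠ 0 := by positivity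
    have h0 := (ih l (by omega) k).mul_left (2 * l - l * z - 2 * k + k * z)
    have h1 := (ih (l - 1) (by omega) k).mul_left (-(l * (1 - z)))
    have h2 := (ih l (by omega) (k + 1)).mul_left (b + k)
    have h3 := (ih l (by omega) (k - 1)).mul_left (k * (1 - z))
    have h := (((h0.add h1).add h2).add h3).mul_left (1 / (b + l))
    refine hasSum_of_eq h (fun m => ?_) ?_
    · have r1 := hyp_contiguous_nat m l hb z
      have r2 := hyp_contiguous_nat m k hb z
      rw [one_div, eq_inv_mul_iff_mul_eq₀ hbl]
      linear_combination (-c) ^ m * (poch b m / m.factorial) *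
        (hyp m (-(k : ℝ)) b z * r1 - hyp m (-(l : ℝ)) b z * r2)
    · rw [one_div, eq_inv_mul_iff_mul_eq₀ hbl]
      have r1 := hyp_contiguous_nat k l hb w
      have r2 := hyp_contiguous_nat l k hb w
      simp only [← F21nn_eq_hyp] at r1 r2
      rw [F21nn_comm l (k + 1), F21nn_comm l k, F21nn_comm l (k - 1)] at r2
      have eq1 : 2 / (1 + c) * (1 - w) = (1 - z) * ((1 + c) / 2) := by
        rw [hz, hw]; field_simp; ring
      have eq2 : 2 * (2 / (1 + c) * (1 - w)) = 2 - z := by rw [hz, hw]; field_simp; ring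
      -- The truncated powers are restored by the vanishing of their coefficients at index `0`.
      have p1 : (l : ℝ) * (2 / (1 + c)) ^ (k + (l - 1))
          = l * ((2 / (1 + c)) ^ (k + l) * ((1 + c) / 2)) := by
        rcases l with _ | l
        · simp
        · rw [Nat.add_sub_cancel, ← add_assoc, pow_succ]; field_simp
      have p2 : (k : ℝ) * (2 / (1 + c)) ^ (k - 1 + l)
          = k * ((2 / (1 + c)) ^ (k + l) * ((1 + c) / 2)) := by
        rcases k with _ | k
        · simp
        · rw [Nat.add_sub_cancel, show k + 1 + l = k + l + 1 by ring, pow_succ]; field_simp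
      rw [← add_assoc, show k + 1 + l = k + l + 1 by ring, pow_succ]
      generalize 2 / (1 + c) = A at *
      generalize A ^ (k + l) = P at *
      generalize (1 + c) ^ (-b) = V at *
      linear_combination V * P * A * (r1 - r2)
        + V * P * ((l - k) * F21nn k l b w * eq2
          + (k * F21nn (k - 1) l b w - l * F21nn k (l - 1) b w) * eq1)
        + (1 - z) * V * F21nn k (l - 1) b w * p1 - (1 - z) * V * F21nn (k - 1) l b w * p2

/-! ### The kernel series -/

theorem sqrt_mul_sqrt_common {u : ℝ} (hu : 0 ≤ u) (a b : ℝ) (ha : 0 ≤ a) :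
    Real.sqrt (u * a) * Real.sqrt (u * b) = u * Real.sqrt (a * b) := by
  rw [← Real.sqrt_mul (mul_nonneg hu ha), show u * a * (u * b) = u ^ 2 * (a * b) by ring,
    Real.sqrt_mul (sq_nonneg u), Real.sqrt_sq hu]

theorem stmt_11 (β γ : ℝ) (hβ : 0 < β) (hγ0 : 0 < γ) (hγ1 : γ < 1)
    (k l : ℕ) (ε ε' : ℝ) (hε : ε = 1 ∨ ε = -1) (hε' : ε' = 1 ∨ ε' = -1)
    (x y : ℝ)
    (hx : x = ε * Real.sqrt (1 - γ ^ 2) * Real.sqrt (β + k))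
    (hy : y = ε' * Real.sqrt (1 - γ ^ 2) * Real.sqrt (β + l))
    (Φx Φy : ℕ → ℝ)
    (hΦxe : ∀ n : ℕ, Φx (2 * n) = (-1) ^ n * γ ^ (n + k) *
      Real.sqrt (poch β n * poch β k / (2 * n.factorial * k.factorial)) *
      (1 - γ ^ 2) ^ (β / 2) * meixner n k β (γ ^ 2))
    (hΦxo : ∀ n : ℕ, Φx (2 * n + 1) = (-1) ^ n * γ ^ (n + k) *
      Real.sqrt (poch (β + 1) n * poch β k / (2 * β * n.factorial * k.factorial)) *
      (1 - γ ^ 2) ^ (β / 2) * x * meixner n k (β + 1) (γ ^ 2))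
    (hΦye : ∀ n : ℕ, Φy (2 * n) = (-1) ^ n * γ ^ (n + l) *
      Real.sqrt (poch β n * poch β l / (2 * n.factorial * l.factorial)) *
      (1 - γ ^ 2) ^ (β / 2) * meixner n l β (γ ^ 2))
    (hΦyo : ∀ n : ℕ, Φy (2 * n + 1) = (-1) ^ n * γ ^ (n + l) *
      Real.sqrt (poch (β + 1) n * poch β l / (2 * β * n.factorial * l.factorial)) *
      (1 - γ ^ 2) ^ (β / 2) * y * meixner n l (β + 1) (γ ^ 2)) :
    HasSum (fun n : ℕ => (-Complex.I) ^ n * (Φx n : ℂ) * (Φy n : ℂ))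
      ((((1 / 2) * (2 * γ / (1 + γ ^ 2)) ^ (k + l) * ((1 - γ ^ 2) / (1 + γ ^ 2)) ^ β *
          Real.sqrt (poch β k * poch β l / (k.factorial * l.factorial)) : ℝ) : ℂ) *
        ((F21nn k l β (-(1 / 4) * (γ - 1 / γ) ^ 2) : ℝ) -
          Complex.I * ((x * y / (β * (1 + γ ^ 2)) : ℝ) : ℂ) *
            ((F21nn k l (β + 1) (-(1 / 4) * (γ - 1 / γ) ^ 2) : ℝ) : ℂ))) := by
  have hg2 : 0 < γ ^ 2 := by positivity
  have hg1 : γ ^ 2 < 1 := by nlinarith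
  have hd : 0 < 1 - γ ^ 2 := by linarith
  have hβ1 : 0 < β + 1 := by linarith
  have hrp : (1 - γ ^ 2) ^ (β / 2) * (1 - γ ^ 2) ^ (β / 2) = (1 - γ ^ 2) ^ β := by
    rw [← Real.rpow_add hd, add_halves]
  have hw : -(1 / 4) * (γ - 1 / γ) ^ 2 = -(1 - γ ^ 2) ^ 2 / (4 * γ ^ 2) := by
    field_simp
    ring
  have hk : 0 ≤ poch β k / k.factorial := div_nonneg (poch_pos_s11 hβ k).le (by positivity)
  have hdiv : ((1 - γ ^ 2) / (1 + γ ^ 2)) ^ β = (1 - γ ^ 2) ^ β * (1 + γ ^ 2) ^ (-β) := by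
    rw [Real.div_rpow hd.le (by positivity), Real.rpow_neg (by positivity), div_eq_mul_inv]
  have hrp1 : (1 + γ ^ 2) ^ (-(β + 1)) = (1 + γ ^ 2) ^ (-β) / (1 + γ ^ 2) := by
    rw [neg_add, ← sub_eq_add_neg, Real.rpow_sub_one (by positivity)]
  have hpow : (2 * γ / (1 + γ ^ 2)) ^ (k + l) = γ ^ (k + l) * (2 / (1 + γ ^ 2)) ^ (k + l) := by
    rw [← mul_pow]
    congr 1
    ring
  have hsgn : ∀ m : ℕ, ((-1 : ℝ) ^ m) * (-1) ^ m = 1 := fun m => by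
    rw [← mul_pow]; simp
  set R := Real.sqrt (poch β k * poch β l / (k.factorial * l.factorial)) with hR
  have hR' : Real.sqrt (poch β k / k.factorial * (poch β l / l.factorial)) = R := by
    rw [hR, div_mul_div_comm]
  -- The even-indexed terms, and the odd-indexed ones up to the factor `-i`, are real.
  have hE : ∀ m : ℕ, (-1) ^ m * (Φx (2 * m) * Φy (2 * m)) =
      1 / 2 * γ ^ (k + l) * (1 - γ ^ 2) ^ β * R * ((-γ ^ 2) ^ m * (poch β m / m.factorial) *
        (meixner m k β (γ ^ 2) * meixner m l β (γ ^ 2))) := by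
    intro m
    have hp : 0 ≤ poch β m / (2 * m.factorial) := div_nonneg (poch_pos_s11 hβ m).le (by positivity)
    have hs := sqrt_mul_sqrt_common hp _ (poch β l / l.factorial) hk
    rw [hR', div_mul_div_comm, div_mul_div_comm] at hs
    rw [hΦxe, hΦye, ← hrp, neg_pow (γ ^ 2), ← pow_mul, pow_mul']
    linear_combination (-1) ^ m * ((-1) ^ m * (-1) ^ m) * γ ^ (m + k) * γ ^ (m + l) *
      ((1 - γ ^ 2) ^ (β / 2) * (1 - γ ^ 2) ^ (β / 2)) *
      (meixner m k β (γ ^ 2) * meixner m l β (γ ^ 2)) * hs +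
      (-1) ^ m * γ ^ (m + k) * γ ^ (m + l) *
      ((1 - γ ^ 2) ^ (β / 2) * (1 - γ ^ 2) ^ (β / 2)) *
      (meixner m k β (γ ^ 2) * meixner m l β (γ ^ 2)) *
      (poch β m / (2 * m.factorial) * R) * hsgn m
  have hO : ∀ m : ℕ, (-1) ^ m * (Φx (2 * m + 1) * Φy (2 * m + 1)) =
      1 / 2 * γ ^ (k + l) * (1 - γ ^ 2) ^ β * R * (x * y / β) *
        ((-γ ^ 2) ^ m * (poch (β + 1) m / m.factorial) *
        (meixner m k (β + 1) (γ ^ 2) * meixner m l (β + 1) (γ ^ 2))) := by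
    intro m
    have hp : 0 ≤ poch (β + 1) m / (2 * β * m.factorial) :=
      div_nonneg (poch_pos_s11 hβ1 m).le (by positivity)
    have hs := sqrt_mul_sqrt_common hp _ (poch β l / l.factorial) hk
    rw [hR', div_mul_div_comm, div_mul_div_comm] at hs
    rw [hΦxo, hΦyo, ← hrp, neg_pow (γ ^ 2), ← pow_mul, pow_mul']
    linear_combination (-1) ^ m * ((-1) ^ m * (-1) ^ m) * γ ^ (m + k) * γ ^ (m + l) *
      ((1 - γ ^ 2) ^ (β / 2) * (1 - γ ^ 2) ^ (β / 2)) * (x * y) *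
      (meixner m k (β + 1) (γ ^ 2) * meixner m l (β + 1) (γ ^ 2)) * hs +
      (-1) ^ m * γ ^ (m + k) * γ ^ (m + l) *
      ((1 - γ ^ 2) ^ (β / 2) * (1 - γ ^ 2) ^ (β / 2)) * (x * y) *
      (meixner m k (β + 1) (γ ^ 2) * meixner m l (β + 1) (γ ^ 2)) *
      (poch (β + 1) m / (2 * β * m.factorial) * R) * hsgn m
  have hIe : ∀ m : ℕ, (-Complex.I) ^ (2 * m) = (-1) ^ m := fun m => by
    rw [pow_mul, neg_sq, Complex.I_sq]
  have he := Complex.hasSum_ofReal.mpr (hasSum_of_eq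
    ((hasSum_bilinear hβ hg2 hg1 l k).mul_left (1 / 2 * γ ^ (k + l) * (1 - γ ^ 2) ^ β * R)) hE rfl)
  have ho := (Complex.hasSum_ofReal.mpr (hasSum_of_eq
    ((hasSum_bilinear hβ1 hg2 hg1 l k).mul_left
      (1 / 2 * γ ^ (k + l) * (1 - γ ^ 2) ^ β * R * (x * y / β))) hO rfl)).mul_left (-Complex.I)
  have hfe : ∀ m : ℕ, (-Complex.I) ^ (2 * m) * (Φx (2 * m) : ℂ) * (Φy (2 * m) : ℂ) =
      (((-1) ^ m * (Φx (2 * m) * Φy (2 * m)) : ℝ) : ℂ) := fun m => by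
    rw [hIe]
    push_cast
    ring
  have hfo : ∀ m : ℕ,
      (-Complex.I) ^ (2 * m + 1) * (Φx (2 * m + 1) : ℂ) * (Φy (2 * m + 1) : ℂ) =
      -Complex.I * (((-1) ^ m * (Φx (2 * m + 1) * Φy (2 * m + 1)) : ℝ) : ℂ) := fun m => by
    rw [pow_succ, hIe]
    push_cast
    ring
  rw [← funext hfe] at he
  rw [← funext hfo] at ho
  have h := HasSum.even_add_odd (f := fun n : ℕ => (-Complex.I) ^ n * (Φx n : ℂ) * (Φy n : ℂ)) he ho
  rw [hw, hdiv, hpow, div_mul_eq_div_div (x * y)]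
  rw [hrp1] at h
  convert h using 1
  push_cast
  ring
end
end
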